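/- arXiv:2406.10472 — 12 statements merged into one kernel-verified Lean document; each statement's English description precedes it below -/
import Mathlib

section
/- A point x is feasible for the chance-constrained program if and only if it lifts to a feasible point of the MILP reformulation: for every x ∈ 𝒳, one has ∑_{i ∈ {1,…,n} : Tx ≥ ξⁱ} pᵢ ≥ 1 − ε if and only if there exist v ∈ ℝ^m and z ∈ {0,1}ⁿ with (x,v,z) ∈ F_MILP. Consequently the projection of F_MILP onto the x-coordinates equals the feasible set {x ∈ 𝒳 : ∑_{i : Tx ≥ ξⁱ} pᵢ ≥ 1 − ε} of the chance-constrained program. -/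
/-! The lift of a feasible `x` takes `v = T x` and lets `z i` be the indicator of the scenarios
violated by `x`; since `∑ p = 1`, the knapsack constraint on `z` is the chance constraint.
The sign constraint `v ≥ 0` holds because `1 - ε > 0` forces some scenario to be satisfied,
and `T x ≥ ξ i ≥ 0` for that scenario. Conversely, `z i = 0` forces scenario `i` to be satisfied,
so `∑ p i * (1 - z i)` bounds the probability of satisfaction from below. -/

/-- The feasible set of the MILP reformulation of the chance-constrained program. -/
def milpSet (n m d : ℕ) (ξ : Fin n → Fin m → ℝ) (p : Fin n → ℝ) (ε : ℝ)
    (X : Set (Fin d → ℝ)) (T : Matrix (Fin m) (Fin d) ℝ) :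
    Set ((Fin d → ℝ) × (Fin m → ℝ) × (Fin n → ℝ)) :=
  {q | q.1 ∈ X ∧ (∀ k, 0 ≤ q.2.1 k) ∧ T.mulVec q.1 = q.2.1 ∧
      (∀ i, q.2.2 i = 0 ∨ q.2.2 i = 1) ∧
      (∀ i k, (1 - q.2.2 i) * ξ i k ≤ q.2.1 k) ∧
      ∑ i, p i * q.2.2 i ≤ ε}

theorem chance_iff_exists_lift (n m d : ℕ)
    (ξ : Fin n → Fin m → ℝ) (hξ : ∀ i k, 0 ≤ ξ i k)
    (p : Fin n → ℝ) (hp : ∀ i, 0 ≤ p i) (hps : ∑ i, p i = 1)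
    (ε : ℝ) (hε1 : ε < 1)
    (X : Set (Fin d → ℝ)) (T : Matrix (Fin m) (Fin d) ℝ) (x : Fin d → ℝ) (hx : x ∈ X) :
    1 - ε ≤ ∑ i ∈ Finset.univ.filter (fun i => ∀ k, ξ i k ≤ T.mulVec x k), p i ↔
      ∃ v z, (x, v, z) ∈ milpSet n m d ξ p ε X T := by
  constructor
  · intro h
    have h_pos : ∑ i ∈ Finset.univ.filter (fun i => ∀ k, ξ i k ≤ T.mulVec x k), p i ≠ 0 := by
      linarith
    obtain ⟨j, hj, -⟩ := Finset.exists_ne_zero_of_sum_ne_zero h_pos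
    have hj' := (Finset.mem_filter.mp hj).2
    refine ⟨T.mulVec x, fun i => 1 - if ∀ k, ξ i k ≤ T.mulVec x k then 1 else 0, hx,
      fun k => (hξ j k).trans (hj' k), rfl, ?_, ?_, ?_⟩
    · intro i
      dsimp only
      split_ifs <;> simp
    · intro i k
      dsimp only
      split_ifs with hi
      · simpa using hi k
      · simpa using (hξ j k).trans (hj' k)
    · simp only [mul_sub, mul_one, mul_ite, mul_zero, Finset.sum_sub_distrib, hps]
      rw [← Finset.sum_filter]
      linarith
  · rintro ⟨v, z, -, -, hv, hz, hc, hs⟩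
    dsimp only at hv hz hc hs
    subst hv
    have key : ∑ i, (p i - p i * z i) ≤
        ∑ i ∈ Finset.univ.filter (fun i => ∀ k, ξ i k ≤ T.mulVec x k), p i := by
      rw [Finset.sum_filter]
      refine Finset.sum_le_sum fun i _ => ?_
      rcases hz i with h0 | h1
      · have hi : ∀ k, ξ i k ≤ T.mulVec x k := fun k => by simpa [h0] using hc i k
        simp [hi, h0]
      · rw [h1, mul_one, sub_self]
        split_ifs
        · exact hp i
        · exact le_rfl
    rw [Finset.sum_sub_distrib, hps] at key
    linarith

/-- A point `x` is feasible for the chance-constrained program iff it lifts to a feasible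
point of the MILP reformulation; consequently the projection of the MILP feasible set onto
the `x`-coordinates equals the feasible set of the chance-constrained program. -/
theorem stmt0 (n m d : ℕ) (hn : 0 < n) (hm : 0 < m) (hd : 0 < d)
    (ξ : Fin n → Fin m → ℝ) (hξ : ∀ i k, 0 ≤ ξ i k)
    (p : Fin n → ℝ) (hp : ∀ i, 0 ≤ p i) (hps : ∑ i, p i = 1)
    (ε : ℝ) (hε0 : 0 < ε) (hε1 : ε < 1)
    (X : Set (Fin d → ℝ)) (T : Matrix (Fin m) (Fin d) ℝ) :
    (∀ x ∈ X,
      (1 - ε ≤ ∑ i ∈ Finset.univ.filter (fun i => ∀ k, ξ i k ≤ T.mulVec x k), p i ↔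
        ∃ v z, (x, v, z) ∈ milpSet n m d ξ p ε X T)) ∧
    {x | ∃ v z, (x, v, z) ∈ milpSet n m d ξ p ε X T} =
      {x | x ∈ X ∧
        1 - ε ≤ ∑ i ∈ Finset.univ.filter (fun i => ∀ k, ξ i k ≤ T.mulVec x k), p i} := by
  have key := chance_iff_exists_lift n m d ξ hξ p hp hps ε hε1 X T
  refine ⟨key, Set.ext fun x => ⟨?_, fun h => (key x h.1).mp h.2⟩⟩
  rintro ⟨v, z, h⟩
  exact ⟨h.1, (key x h.1).mpr ⟨v, z, h⟩⟩
end

section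
/- The MILP and MINLP formulations have the same x-projection: for every (x,v,z) ∈ F_MILP there exists z′ ∈ {0,1}ⁿ with (x,v,z′) ∈ F_MINLP (namely z′ᵢ = 0 if v ≥ ξⁱ and z′ᵢ = zᵢ otherwise), and consequently the projections of F_MILP and F_MINLP onto the x-coordinates are equal. -/
/-- The feasible set of the MINLP formulation: the MILP feasible set together with the
if-then constraints `zᵢ = 1 → v ≱ ξⁱ`. -/
def minlpSet (n m d : ℕ) (ξ : Fin n → Fin m → ℝ) (p : Fin n → ℝ) (ε : ℝ)
    (X : Set (Fin d → ℝ)) (T : Matrix (Fin m) (Fin d) ℝ) :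
    Set ((Fin d → ℝ) × (Fin m → ℝ) × (Fin n → ℝ)) :=
  {q | q ∈ milpSet n m d ξ p ε X T ∧ ∀ i, q.2.2 i = 1 → ∃ k, q.2.1 k < ξ i k}

/-- Every MILP-feasible point lifts to an MINLP-feasible point with the same `x` and `v`
(namely `z′ᵢ = 0` if `v ≥ ξⁱ` and `z′ᵢ = zᵢ` otherwise); consequently the projections of
the two feasible sets onto the `x`-coordinates are equal. -/
theorem stmt1 (n m d : ℕ) (hn : 0 < n) (hm : 0 < m) (hd : 0 < d)
    (ξ : Fin n → Fin m → ℝ) (hξ : ∀ i k, 0 ≤ ξ i k)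
    (p : Fin n → ℝ) (hp : ∀ i, 0 ≤ p i) (hps : ∑ i, p i = 1)
    (ε : ℝ) (hε0 : 0 < ε) (hε1 : ε < 1)
    (X : Set (Fin d → ℝ)) (T : Matrix (Fin m) (Fin d) ℝ) :
    (∀ x v z, (x, v, z) ∈ milpSet n m d ξ p ε X T →
      ∃ z' : Fin n → ℝ, (x, v, z') ∈ minlpSet n m d ξ p ε X T ∧
        ∀ i, ((∀ k, ξ i k ≤ v k) → z' i = 0) ∧ (¬ (∀ k, ξ i k ≤ v k) → z' i = z i)) ∧
    {x | ∃ v z, (x, v, z) ∈ milpSet n m d ξ p ε X T} =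
      {x | ∃ v z, (x, v, z) ∈ minlpSet n m d ξ p ε X T} := by
  classical
  have key : ∀ x v z, (x, v, z) ∈ milpSet n m d ξ p ε X T →
      ∃ z' : Fin n → ℝ, (x, v, z') ∈ minlpSet n m d ξ p ε X T ∧
        ∀ i, ((∀ k, ξ i k ≤ v k) → z' i = 0) ∧ (¬ (∀ k, ξ i k ≤ v k) → z' i = z i) := by
    rintro x v z ⟨hX, hv, hT, hz, hcov, hsum⟩
    dsimp only at hX hv hT hz hcov hsum
    refine ⟨fun i => if ∀ k, ξ i k ≤ v k then 0 else z i,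
      ⟨⟨hX, hv, hT, fun i => ?_, fun i k => ?_, ?_⟩, fun i hi => ?_⟩,
      fun i => ⟨fun h => if_pos h, fun h => if_neg h⟩⟩
    · dsimp only
      split_ifs
      · exact Or.inl rfl
      · exact hz i
    · dsimp only
      split_ifs with h
      · simpa using h k
      · exact hcov i k
    · refine le_trans (Finset.sum_le_sum fun i _ => mul_le_mul_of_nonneg_left ?_ (hp i)) hsum
      dsimp only
      split_ifs
      · rcases hz i with h | h <;> simp [h]
      · exact le_rfl
    · dsimp only at hi ⊢
      split_ifs at hi with h
      · exact absurd hi zero_ne_one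
      · simpa using h
  refine ⟨key, Set.ext fun x => ⟨?_, ?_⟩⟩
  · rintro ⟨v, z, h⟩
    obtain ⟨z', hz', -⟩ := key x v z h
    exact ⟨v, z', hz'⟩
  · rintro ⟨v, z, h⟩
    exact ⟨v, z, h.1⟩
end

section
/- (Validity of the dominance inequalities on the MINLP feasible set.) If (x,v,z) ∈ F_MINLP and i, j ∈ {1,…,n} with i ≠ j satisfy ξⁱ ≤ ξʲ componentwise, then zᵢ ≤ zⱼ. In particular, if zⱼ = 0 then zᵢ = 0 for every i with ξⁱ ≤ ξʲ, and if zⱼ = 1 then zᵢ = 1 for every i with ξʲ ≤ ξⁱ. -/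
/-- (Validity of the dominance inequalities on the MINLP feasible set.) If
`(x,v,z) ∈ F_MINLP` and `ξⁱ ≤ ξʲ` componentwise with `i ≠ j`, then `zᵢ ≤ zⱼ`.
In particular, if `zⱼ = 0` then `zᵢ = 0` for every `i` with `ξⁱ ≤ ξʲ`, and if
`zⱼ = 1` then `zᵢ = 1` for every `i` with `ξʲ ≤ ξⁱ`. -/
theorem stmt3 (n m d : ℕ) (hn : 0 < n) (hm : 0 < m) (hd : 0 < d)
    (ξ : Fin n → Fin m → ℝ) (hξ : ∀ i k, 0 ≤ ξ i k)
    (p : Fin n → ℝ) (hp : ∀ i, 0 ≤ p i) (hps : ∑ i, p i = 1)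
    (ε : ℝ) (hε0 : 0 < ε) (hε1 : ε < 1)
    (X : Set (Fin d → ℝ)) (T : Matrix (Fin m) (Fin d) ℝ)
    (x : Fin d → ℝ) (v : Fin m → ℝ) (z : Fin n → ℝ)
    (hmem : (x, v, z) ∈ minlpSet n m d ξ p ε X T) :
    (∀ i j, i ≠ j → (∀ k, ξ i k ≤ ξ j k) → z i ≤ z j) ∧
    (∀ j, z j = 0 → ∀ i, (∀ k, ξ i k ≤ ξ j k) → z i = 0) ∧
    (∀ j, z j = 1 → ∀ i, (∀ k, ξ j k ≤ ξ i k) → z i = 1) := by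
  obtain ⟨⟨-, -, -, hz, hv, -⟩, hviol⟩ := hmem
  dsimp only at hz hv hviol
  have key : ∀ i j, (∀ k, ξ i k ≤ ξ j k) → z i = 1 → z j = 1 := by
    intro i j hij hi
    refine (hz j).resolve_left fun hj => ?_
    obtain ⟨k, hk⟩ := hviol i hi
    have hvk := hv j k
    simp only [hj, sub_zero, one_mul] at hvk
    exact absurd (hk.trans_le (hij k)) hvk.not_gt
  refine ⟨fun i j _ hij => ?_, fun j hj i hij => ?_, fun j hj i hji => key j i hji hj⟩
  · rcases hz i with hi | hi
    · rcases hz j with hj | hj <;> simp [hi, hj]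
    · rw [hi, key i j hij hi]
  · refine (hz i).resolve_right fun hi => zero_ne_one (α := ℝ) ?_
    rw [← hj, key i j hij hi]
end

section
/- (Validity of the dominance-based left branch.) Fix j ∈ {1,…,n} and let N_j⁻ = {i ∈ {1,…,n} : ξⁱ ≤ ξʲ componentwise}. Then the following chain of inclusions holds: {(x,v,z) ∈ F_MINLP : zⱼ = 0} ⊆ {(x,v,z) ∈ F_MILP : zᵢ = 0 for all i ∈ N_j⁻} ⊆ {(x,v,z) ∈ F_MILP : zⱼ = 0}. -/
/-- (Validity of the dominance-based left branch.) For fixed `j` with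
`N_j⁻ = {i : ξⁱ ≤ ξʲ}`, the chain of inclusions
`{(x,v,z) ∈ F_MINLP : zⱼ = 0} ⊆ {(x,v,z) ∈ F_MILP : zᵢ = 0, ∀ i ∈ N_j⁻}
⊆ {(x,v,z) ∈ F_MILP : zⱼ = 0}` holds. -/
theorem stmt4 (n m d : ℕ) (hn : 0 < n) (hm : 0 < m) (hd : 0 < d)
    (ξ : Fin n → Fin m → ℝ) (hξ : ∀ i k, 0 ≤ ξ i k)
    (p : Fin n → ℝ) (hp : ∀ i, 0 ≤ p i) (hps : ∑ i, p i = 1)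
    (ε : ℝ) (hε0 : 0 < ε) (hε1 : ε < 1)
    (X : Set (Fin d → ℝ)) (T : Matrix (Fin m) (Fin d) ℝ) (j : Fin n) :
    {q ∈ minlpSet n m d ξ p ε X T | q.2.2 j = 0} ⊆
      {q ∈ milpSet n m d ξ p ε X T | ∀ i, (∀ k, ξ i k ≤ ξ j k) → q.2.2 i = 0} ∧
    {q ∈ milpSet n m d ξ p ε X T | ∀ i, (∀ k, ξ i k ≤ ξ j k) → q.2.2 i = 0} ⊆
      {q ∈ milpSet n m d ξ p ε X T | q.2.2 j = 0} := by
  refine ⟨?_, fun q hq => ⟨hq.1, hq.2 j fun _ => le_rfl⟩⟩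
  rintro ⟨x, v, z⟩ ⟨⟨hq, hviol⟩, hj⟩
  refine ⟨hq, fun i hij => ?_⟩
  obtain ⟨-, -, -, hbin, hcov, -⟩ := hq
  refine (hbin i).resolve_right fun hi => ?_
  -- `zⱼ = 0` forces `v ≥ ξʲ ≥ ξⁱ`, whereas `zᵢ = 1` asks for a coordinate with `vₖ < ξⁱₖ`.
  obtain ⟨k, hk⟩ := hviol i hi
  have hcovj := hcov j k
  simp only at hj hk hcovj
  rw [hj, sub_zero, one_mul] at hcovj
  exact absurd hk (not_lt.mpr ((hij k).trans hcovj))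
end

section
/- (Theorem of Ruszczyński, equivalence of MILP and the dominance-strengthened formulation.) Let F_RF = {(x,v,z) ∈ F_MILP : zᵢ ≤ zⱼ for all i ≠ j with ξⁱ ≤ ξʲ componentwise}. Then for every (x,v,z) ∈ F_MILP there exists z′ ∈ {0,1}ⁿ with (x,v,z′) ∈ F_RF. Consequently the projections of F_MILP and F_RF onto the x-coordinates coincide, and the infima of c⊤x over F_MILP and over F_RF are equal; moreover, any (x,v,z) minimizing c⊤x over F_MILP yields a minimizer (x,v,z′) of c⊤x over F_RF with the same x. -/
/-- The MILP feasible set strengthened by the dominance inequalities of Ruszczyński. -/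
def rfSet (n m d : ℕ) (ξ : Fin n → Fin m → ℝ) (p : Fin n → ℝ) (ε : ℝ)
    (X : Set (Fin d → ℝ)) (T : Matrix (Fin m) (Fin d) ℝ) :
    Set ((Fin d → ℝ) × (Fin m → ℝ) × (Fin n → ℝ)) :=
  {q | q ∈ milpSet n m d ξ p ε X T ∧
      ∀ i j, i ≠ j → (∀ k, ξ i k ≤ ξ j k) → q.2.2 i ≤ q.2.2 j}

open Classical in
/-- The indicator of the scenarios `i` not covered by `v`: it is `0` if `ξ i ≤ v` componentwise and
`1` otherwise. -/
noncomputable def uncovered {n m : ℕ} (ξ : Fin n → Fin m → ℝ) (v : Fin m → ℝ) (i : Fin n) : ℝ :=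
  if ∀ k, ξ i k ≤ v k then 0 else 1

/-- Replacing `z` by the indicator of uncovered scenarios lands in the strengthened set. -/
lemma uncovered_mem_rfSet {n m d : ℕ} {ξ : Fin n → Fin m → ℝ} {p : Fin n → ℝ}
    (hp : ∀ i, 0 ≤ p i) {ε : ℝ} {X : Set (Fin d → ℝ)} {T : Matrix (Fin m) (Fin d) ℝ}
    {x : Fin d → ℝ} {v : Fin m → ℝ} {z : Fin n → ℝ}
    (h : (x, v, z) ∈ milpSet n m d ξ p ε X T) :
    (x, v, uncovered ξ v) ∈ rfSet n m d ξ p ε X T := by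
  obtain ⟨hx, hv, hT, hz, hb, hs⟩ := h
  dsimp only at hx hv hT hz hb hs
  refine ⟨⟨hx, hv, hT, fun i => ?_, fun i k => ?_, ?_⟩, fun i j _ hij => ?_⟩
  · dsimp only [uncovered]
    split_ifs <;> simp
  · dsimp only [uncovered]
    split_ifs with hc
    · simpa using hc k
    · simpa using hv k
  · refine le_trans (Finset.sum_le_sum fun i _ => mul_le_mul_of_nonneg_left ?_ (hp i)) hs
    dsimp only [uncovered]
    split_ifs with hc
    · rcases hz i with h0 | h1 <;> simp [*]
    · rcases hz i with h0 | h1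
      · exact absurd (fun k => by simpa [h0] using hb i k) hc
      · exact h1.ge
  · dsimp only [uncovered]
    split_ifs with hi hj hj
    · exact le_rfl
    · exact zero_le_one
    · exact absurd (fun k => (hij k).trans (hj k)) hi
    · exact le_rfl

/-- (Ruszczyński's theorem.) Every MILP-feasible point lifts (with the same `x,v`) to a
point of the dominance-strengthened formulation; consequently the `x`-projections coincide,
the infima of `c⊤x` coincide, and minimizers of the MILP yield minimizers of the
strengthened formulation with the same `x`. -/
theorem stmt5 (n m d : ℕ) (hn : 0 < n) (hm : 0 < m) (hd : 0 < d)
    (ξ : Fin n → Fin m → ℝ) (hξ : ∀ i k, 0 ≤ ξ i k)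
    (p : Fin n → ℝ) (hp : ∀ i, 0 ≤ p i) (hps : ∑ i, p i = 1)
    (ε : ℝ) (hε0 : 0 < ε) (hε1 : ε < 1)
    (X : Set (Fin d → ℝ)) (T : Matrix (Fin m) (Fin d) ℝ) (c : Fin d → ℝ) :
    (∀ x v z, (x, v, z) ∈ milpSet n m d ξ p ε X T →
      ∃ z' : Fin n → ℝ, (x, v, z') ∈ rfSet n m d ξ p ε X T) ∧
    {x | ∃ v z, (x, v, z) ∈ milpSet n m d ξ p ε X T} =
      {x | ∃ v z, (x, v, z) ∈ rfSet n m d ξ p ε X T} ∧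
    sInf ((fun q => ∑ k, c k * q.1 k) '' milpSet n m d ξ p ε X T) =
      sInf ((fun q => ∑ k, c k * q.1 k) '' rfSet n m d ξ p ε X T) ∧
    ∀ x v z, (x, v, z) ∈ milpSet n m d ξ p ε X T →
      (∀ q ∈ milpSet n m d ξ p ε X T, ∑ k, c k * x k ≤ ∑ k, c k * q.1 k) →
      ∃ z' : Fin n → ℝ, (x, v, z') ∈ rfSet n m d ξ p ε X T ∧
        ∀ q ∈ rfSet n m d ξ p ε X T, ∑ k, c k * x k ≤ ∑ k, c k * q.1 k := by
  refine ⟨fun x v z h => ⟨_, uncovered_mem_rfSet hp h⟩, ?_, ?_,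
    fun x v z h hmin => ⟨_, uncovered_mem_rfSet hp h, fun q hq => hmin q hq.1⟩⟩
  · ext x
    exact ⟨fun ⟨v, _, h⟩ => ⟨v, _, uncovered_mem_rfSet hp h⟩, fun ⟨v, z, h⟩ => ⟨v, z, h.1⟩⟩
  · -- The two sets of objective values are equal, so no boundedness or nonemptiness is needed.
    congr 1
    ext r
    constructor
    · rintro ⟨⟨x, v, z⟩, h, rfl⟩
      exact ⟨(x, v, uncovered ξ v), uncovered_mem_rfSet hp h, rfl⟩
    · rintro ⟨q, h, rfl⟩
      exact ⟨q, h.1, rfl⟩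
end

section
/- (Proposition 3.3: the dominance inequalities do not improve the LP relaxation.) Let P_MILP = {(x,v,z) ∈ 𝒳 × ℝ^m × [0,1]ⁿ : v ≥ 0, Tx = v, v ≥ (1−zᵢ)ξⁱ for all i, ∑ᵢ pᵢ zᵢ ≤ ε} be the LP relaxation of the MILP formulation, and let P_RF = {(x,v,z) ∈ P_MILP : zᵢ ≤ zⱼ for all i ≠ j with ξⁱ ≤ ξʲ componentwise} be the LP relaxation of the dominance-strengthened formulation. Then for every (x,v,z) ∈ P_MILP there exists z* ∈ [0,1]ⁿ with (x,v,z*) ∈ P_RF. Consequently the projections of P_MILP and P_RF onto the (x,v)-coordinates coincide, and the infima of c⊤x over P_MILP and over P_RF are equal. -/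
/-!
Lower each `z i` to the least `z j` among the scenarios `j` that dominate `i` (including `i`
itself). If `j` attains this minimum, then `(1 - z j) * ξ i ≤ (1 - z j) * ξ j ≤ v`, so the
covering inequalities survive; the knapsack inequality survives because no coordinate increased;
and the dominance inequalities hold because, by transitivity, the scenarios dominating `j` also
dominate every `i` that `j` dominates. Since `x` and `v` are untouched, the projections and the
infima agree.
-/

/-- The LP relaxation of the MILP formulation: `z ∈ [0,1]ⁿ`. -/
def lpMilpSet (n m d : ℕ) (ξ : Fin n → Fin m → ℝ) (p : Fin n → ℝ) (ε : ℝ)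
    (X : Set (Fin d → ℝ)) (T : Matrix (Fin m) (Fin d) ℝ) :
    Set ((Fin d → ℝ) × (Fin m → ℝ) × (Fin n → ℝ)) :=
  {q | q.1 ∈ X ∧ (∀ k, 0 ≤ q.2.1 k) ∧ T.mulVec q.1 = q.2.1 ∧
      (∀ i, 0 ≤ q.2.2 i ∧ q.2.2 i ≤ 1) ∧
      (∀ i k, (1 - q.2.2 i) * ξ i k ≤ q.2.1 k) ∧
      ∑ i, p i * q.2.2 i ≤ ε}

/-- The LP relaxation of the dominance-strengthened formulation. -/
def lpRfSet (n m d : ℕ) (ξ : Fin n → Fin m → ℝ) (p : Fin n → ℝ) (ε : ℝ)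
    (X : Set (Fin d → ℝ)) (T : Matrix (Fin m) (Fin d) ℝ) :
    Set ((Fin d → ℝ) × (Fin m → ℝ) × (Fin n → ℝ)) :=
  {q | q ∈ lpMilpSet n m d ξ p ε X T ∧
      ∀ i j, i ≠ j → (∀ k, ξ i k ≤ ξ j k) → q.2.2 i ≤ q.2.2 j}

/-- Every point of the relaxation can be made to satisfy the dominance inequalities by changing
only its `z`-part. -/
theorem exists_mem_lpRfSet {n m d : ℕ} {ξ : Fin n → Fin m → ℝ}
    {p : Fin n → ℝ} (hp : ∀ i, 0 ≤ p i) {ε : ℝ}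
    {X : Set (Fin d → ℝ)} {T : Matrix (Fin m) (Fin d) ℝ}
    {x : Fin d → ℝ} {v : Fin m → ℝ} {z : Fin n → ℝ}
    (h : (x, v, z) ∈ lpMilpSet n m d ξ p ε X T) :
    ∃ zs : Fin n → ℝ, (x, v, zs) ∈ lpRfSet n m d ξ p ε X T := by
  classical
  obtain ⟨hx, hv, hT, hz, hcov, hsum⟩ := h
  have hmin : ∀ i, ∃ j, ξ i ≤ ξ j ∧ ∀ l, ξ i ≤ ξ l → z j ≤ z l := by
    intro i
    obtain ⟨j, hj, hjmin⟩ := Finset.exists_min_image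
      (Finset.univ.filter fun j => ξ i ≤ ξ j) z ⟨i, by simp⟩
    exact ⟨j, by simpa using hj, fun l hl => hjmin l (by simpa using hl)⟩
  choose f hf hfmin using hmin
  refine ⟨fun i => z (f i), ⟨hx, hv, hT, fun i => hz (f i), fun i k => ?_, ?_⟩, ?_⟩
  · exact (mul_le_mul_of_nonneg_left (hf i k) (sub_nonneg.2 (hz (f i)).2)).trans (hcov (f i) k)
  · exact (Finset.sum_le_sum fun i _ =>
      mul_le_mul_of_nonneg_left (hfmin i i le_rfl) (hp i)).trans hsum
  · intro i j _ hij
    exact hfmin i (f j) (le_trans hij (hf j))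

/-- (Proposition 3.3.) The dominance inequalities do not improve the LP relaxation:
every point of `P_MILP` lifts (with the same `x,v`) to a point of `P_RF`; consequently the
projections onto the `(x,v)`-coordinates coincide and the infima of `c⊤x` coincide. -/
theorem stmt6 (n m d : ℕ) (hn : 0 < n) (hm : 0 < m) (hd : 0 < d)
    (ξ : Fin n → Fin m → ℝ) (hξ : ∀ i k, 0 ≤ ξ i k)
    (p : Fin n → ℝ) (hp : ∀ i, 0 ≤ p i) (hps : ∑ i, p i = 1)
    (ε : ℝ) (hε0 : 0 < ε) (hε1 : ε < 1)
    (X : Set (Fin d → ℝ)) (T : Matrix (Fin m) (Fin d) ℝ) (c : Fin d → ℝ) :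
    (∀ x v z, (x, v, z) ∈ lpMilpSet n m d ξ p ε X T →
      ∃ zs : Fin n → ℝ, (x, v, zs) ∈ lpRfSet n m d ξ p ε X T) ∧
    {q : (Fin d → ℝ) × (Fin m → ℝ) | ∃ z, (q.1, q.2, z) ∈ lpMilpSet n m d ξ p ε X T} =
      {q : (Fin d → ℝ) × (Fin m → ℝ) | ∃ z, (q.1, q.2, z) ∈ lpRfSet n m d ξ p ε X T} ∧
    sInf ((fun q => ∑ k, c k * q.1 k) '' lpMilpSet n m d ξ p ε X T) =
      sInf ((fun q => ∑ k, c k * q.1 k) '' lpRfSet n m d ξ p ε X T) := by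
  have hlift : ∀ x v z, (x, v, z) ∈ lpMilpSet n m d ξ p ε X T →
      ∃ zs : Fin n → ℝ, (x, v, zs) ∈ lpRfSet n m d ξ p ε X T :=
    fun x v z h => exists_mem_lpRfSet hp h
  refine ⟨hlift, ?_, ?_⟩
  · ext ⟨x, v⟩
    exact ⟨fun ⟨z, h⟩ => hlift x v z h, fun ⟨z, h⟩ => ⟨z, h.1⟩⟩
  -- The two sets of objective values are equal, so no boundedness or nonemptiness is needed.
  · congr 1
    ext r
    constructor
    · rintro ⟨⟨x, v, z⟩, h, rfl⟩
      obtain ⟨zs, hzs⟩ := hlift x v z h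
      exact ⟨(x, v, zs), hzs, rfl⟩
    · rintro ⟨q, h, rfl⟩
      exact ⟨q, h.1, rfl⟩
end

section
/- (Corollary 3.4: equivalence of node LP relaxations.) Let N₀, N₁ ⊆ {1,…,n} be disjoint, with N₀ downward closed under dominance (if i ∈ N₀ and ξ^{i′} ≤ ξⁱ componentwise then i′ ∈ N₀) and N₁ upward closed under dominance (if i ∈ N₁ and ξⁱ ≤ ξ^{i′} componentwise then i′ ∈ N₁). Let P_MILP(N₀,N₁) = {(x,v,z) ∈ 𝒳 × ℝ^m × [0,1]ⁿ : v ≥ 0, Tx = v, v ≥ (1−zᵢ)ξⁱ for all i, ∑ᵢ pᵢ zᵢ ≤ ε, zᵢ = 0 for i ∈ N₀, zᵢ = 1 for i ∈ N₁} and P_RF(N₀,N₁) = {(x,v,z) ∈ P_MILP(N₀,N₁) : zᵢ ≤ zⱼ for all i ≠ j with ξⁱ ≤ ξʲ componentwise}. Then for every (x,v,z) ∈ P_MILP(N₀,N₁) there exists z* ∈ [0,1]ⁿ with (x,v,z*) ∈ P_RF(N₀,N₁); consequently the projections onto the (x,v)-coordinates coincide and the infima of c⊤x over the two sets are equal. 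-/
/-!
Given a point `(x, v, z)` of the weaker relaxation, let `zsᵢ` be the minimum of `zⱼ` over all `j`
with `ξⁱ ≤ ξʲ`. As `i` is itself such a `j`, `zs ≤ z`, which preserves the knapsack constraint and
the fixings to `0`; if the minimum is attained at `j`, then
`(1 - zsᵢ) ξⁱ ≤ (1 - zⱼ) ξʲ ≤ v`; the fixings to `1` survive because `N₁` is upward closed; and
`zs` is monotone because dominance is transitive. This is `lpRfNode_lift`. Since the lift keeps
`x` and `v`, the projections agree, and the two sets of objective values are equal, so that their
infima agree even where `sInf` takes its default value.
-/

/-- The LP relaxation of the MILP formulation at node `(N₀, N₁)`: `z ∈ [0,1]ⁿ`, with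
`zᵢ = 0` for `i ∈ N₀` and `zᵢ = 1` for `i ∈ N₁`. -/
def lpMilpNode (n m d : ℕ) (ξ : Fin n → Fin m → ℝ) (p : Fin n → ℝ) (ε : ℝ)
    (X : Set (Fin d → ℝ)) (T : Matrix (Fin m) (Fin d) ℝ) (N₀ N₁ : Set (Fin n)) :
    Set ((Fin d → ℝ) × (Fin m → ℝ) × (Fin n → ℝ)) :=
  {q | q.1 ∈ X ∧ (∀ k, 0 ≤ q.2.1 k) ∧ T.mulVec q.1 = q.2.1 ∧
      (∀ i, 0 ≤ q.2.2 i ∧ q.2.2 i ≤ 1) ∧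
      (∀ i k, (1 - q.2.2 i) * ξ i k ≤ q.2.1 k) ∧
      (∑ i, p i * q.2.2 i ≤ ε) ∧
      (∀ i ∈ N₀, q.2.2 i = 0) ∧ (∀ i ∈ N₁, q.2.2 i = 1)}

/-- The LP relaxation of the dominance-strengthened formulation at node `(N₀, N₁)`. -/
def lpRfNode (n m d : ℕ) (ξ : Fin n → Fin m → ℝ) (p : Fin n → ℝ) (ε : ℝ)
    (X : Set (Fin d → ℝ)) (T : Matrix (Fin m) (Fin d) ℝ) (N₀ N₁ : Set (Fin n)) :
    Set ((Fin d → ℝ) × (Fin m → ℝ) × (Fin n → ℝ)) :=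
  {q | q ∈ lpMilpNode n m d ξ p ε X T N₀ N₁ ∧
      ∀ i j, i ≠ j → (∀ k, ξ i k ≤ ξ j k) → q.2.2 i ≤ q.2.2 j}

/-- The lift: replace `zᵢ` by the minimum of `zⱼ` over the scenarios `j` that dominate `i`. -/
theorem lpRfNode_lift (n m d : ℕ) (ξ : Fin n → Fin m → ℝ)
    (p : Fin n → ℝ) (hp : ∀ i, 0 ≤ p i) (ε : ℝ)
    (X : Set (Fin d → ℝ)) (T : Matrix (Fin m) (Fin d) ℝ) (N₀ N₁ : Set (Fin n))
    (hup : ∀ i ∈ N₁, ∀ i', (∀ k, ξ i k ≤ ξ i' k) → i' ∈ N₁)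
    (x : Fin d → ℝ) (v : Fin m → ℝ) (z : Fin n → ℝ)
    (h : (x, v, z) ∈ lpMilpNode n m d ξ p ε X T N₀ N₁) :
    ∃ zs : Fin n → ℝ, (x, v, zs) ∈ lpRfNode n m d ξ p ε X T N₀ N₁ := by
  classical
  obtain ⟨hx, hv, hT, hz, hc, hk, h0, h1⟩ := h
  dsimp only at hx hv hT hz hc hk h0 h1
  -- `f i` is a dominating scenario at which the minimum is attained.
  have hmin : ∀ i, ∃ j, (∀ k, ξ i k ≤ ξ j k) ∧
      ∀ l, (∀ k, ξ i k ≤ ξ l k) → z j ≤ z l := fun i =>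
    Set.exists_min_image {j | ∀ k, ξ i k ≤ ξ j k} z (Set.toFinite _) ⟨i, fun _ => le_rfl⟩
  choose f hf hfmin using hmin
  have hle : ∀ i, z (f i) ≤ z i := fun i => hfmin i i fun _ => le_rfl
  refine ⟨fun i => z (f i), ⟨hx, hv, hT, fun i => hz (f i), fun i k => ?_, ?_, fun i hi => ?_,
    fun i hi => h1 _ (hup i hi _ (hf i))⟩, fun i j _ hij => ?_⟩
  · exact (mul_le_mul_of_nonneg_left (hf i k) (sub_nonneg.2 (hz (f i)).2)).trans (hc (f i) k)
  · exact (Finset.sum_le_sum fun i _ => mul_le_mul_of_nonneg_left (hle i) (hp i)).trans hk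
  · exact le_antisymm ((hle i).trans_eq (h0 i hi)) (hz (f i)).1
  · exact hfmin i _ fun k => (hij k).trans (hf j k)

/-- (Corollary 3.4: equivalence of node LP relaxations.) If `N₀` is downward closed and
`N₁` is upward closed under dominance (and they are disjoint), then every point of
`P_MILP(N₀,N₁)` lifts (with the same `x,v`) to a point of `P_RF(N₀,N₁)`; consequently the
projections onto the `(x,v)`-coordinates coincide and the infima of `c⊤x` coincide. -/
theorem stmt7 (n m d : ℕ) (hn : 0 < n) (hm : 0 < m) (hd : 0 < d)
    (ξ : Fin n → Fin m → ℝ) (hξ : ∀ i k, 0 ≤ ξ i k)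
    (p : Fin n → ℝ) (hp : ∀ i, 0 ≤ p i) (hps : ∑ i, p i = 1)
    (ε : ℝ) (hε0 : 0 < ε) (hε1 : ε < 1)
    (X : Set (Fin d → ℝ)) (T : Matrix (Fin m) (Fin d) ℝ) (c : Fin d → ℝ)
    (N₀ N₁ : Set (Fin n)) (hdisj : Disjoint N₀ N₁)
    (hdown : ∀ i ∈ N₀, ∀ i', (∀ k, ξ i' k ≤ ξ i k) → i' ∈ N₀)
    (hup : ∀ i ∈ N₁, ∀ i', (∀ k, ξ i k ≤ ξ i' k) → i' ∈ N₁) :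
    (∀ x v z, (x, v, z) ∈ lpMilpNode n m d ξ p ε X T N₀ N₁ →
      ∃ zs : Fin n → ℝ, (x, v, zs) ∈ lpRfNode n m d ξ p ε X T N₀ N₁) ∧
    {q : (Fin d → ℝ) × (Fin m → ℝ) | ∃ z, (q.1, q.2, z) ∈ lpMilpNode n m d ξ p ε X T N₀ N₁} =
      {q : (Fin d → ℝ) × (Fin m → ℝ) | ∃ z, (q.1, q.2, z) ∈ lpRfNode n m d ξ p ε X T N₀ N₁} ∧
    sInf ((fun q => ∑ k, c k * q.1 k) '' lpMilpNode n m d ξ p ε X T N₀ N₁) =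
      sInf ((fun q => ∑ k, c k * q.1 k) '' lpRfNode n m d ξ p ε X T N₀ N₁) := by
  have lift := lpRfNode_lift n m d ξ p hp ε X T N₀ N₁ hup
  refine ⟨lift, ?_, congrArg sInf ?_⟩
  · ext ⟨x, v⟩
    exact ⟨fun ⟨z, hz⟩ => lift x v z hz, fun ⟨z, hz⟩ => ⟨z, hz.1⟩⟩
  · refine Set.Subset.antisymm ?_ (Set.image_mono fun _ hq => hq.1)
    rintro _ ⟨⟨x, v, z⟩, hz, rfl⟩
    obtain ⟨zs, hzs⟩ := lift x v z hz
    exact ⟨(x, v, zs), hzs, rfl⟩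
end

section
/- (Equivalence of the preprocessed MILP formulation.) Suppose ξ⁰ ∈ ℝ^m is a valid lower bound for the MILP formulation, i.e., every (x,v,z) ∈ F_MILP satisfies v ≥ ξ⁰, and suppose ξ⁰ ≥ 0. Define ξ̄ⁱ ∈ ℝ^m by ξ̄ⁱₖ = max{ξⁱₖ, ξ⁰ₖ}. Then F_MILP = {(x,v,z) ∈ 𝒳 × ℝ^m × {0,1}ⁿ : v ≥ 0, Tx = v, v ≥ (1−zᵢ)ξ̄ⁱ for all i ∈ {1,…,n}, ∑ᵢ pᵢ zᵢ ≤ ε}. -/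
/-- (Equivalence of the preprocessed MILP formulation.) If `ξ⁰ ≥ 0` is a valid lower
bound for `v` on the MILP feasible set, then replacing each `ξⁱ` by its componentwise
maximum with `ξ⁰` yields the same feasible set. -/
theorem stmt9 (n m d : ℕ) (hn : 0 < n) (hm : 0 < m) (hd : 0 < d)
    (ξ : Fin n → Fin m → ℝ) (hξ : ∀ i k, 0 ≤ ξ i k)
    (p : Fin n → ℝ) (hp : ∀ i, 0 ≤ p i) (hps : ∑ i, p i = 1)
    (ε : ℝ) (hε0 : 0 < ε) (hε1 : ε < 1)
    (X : Set (Fin d → ℝ)) (T : Matrix (Fin m) (Fin d) ℝ)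
    (ξ0 : Fin m → ℝ) (hξ0 : ∀ k, 0 ≤ ξ0 k)
    (hlb : ∀ q ∈ milpSet n m d ξ p ε X T, ∀ k, ξ0 k ≤ q.2.1 k) :
    milpSet n m d ξ p ε X T =
      milpSet n m d (fun i k => max (ξ i k) (ξ0 k)) p ε X T := by
  ext q
  constructor
  · intro hq
    -- The lower bound is available because `q` lies in the original feasible set.
    have hlbq := hlb q hq
    obtain ⟨hX, hv, hT, hz, hc, hs⟩ := hq
    refine ⟨hX, hv, hT, hz, fun i k => ?_, hs⟩
    have hik := hc i k
    rcases hz i with h | h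
    · rw [h, sub_zero, one_mul] at hik ⊢
      exact max_le hik (hlbq k)
    · rw [h, sub_self, zero_mul]
      exact hv k
  · rintro ⟨hX, hv, hT, hz, hc, hs⟩
    refine ⟨hX, hv, hT, hz, fun i k => ?_, hs⟩
    have hik := hc i k
    rcases hz i with h | h
    · rw [h, sub_zero, one_mul] at hik ⊢
      exact (le_max_left _ _).trans hik
    · rw [h, sub_self, zero_mul]
      exact hv k
end

section
/- (Validity of the strengthened dominance inequalities.) Suppose ξ⁰ ∈ ℝ^m is a valid lower bound for the MILP formulation, i.e., every (x,v,z) ∈ F_MILP satisfies v ≥ ξ⁰, and define ξ̄ⁱ ∈ ℝ^m by ξ̄ⁱₖ = max{ξⁱₖ, ξ⁰ₖ}. If (x,v,z) ∈ F_MINLP and i, j ∈ {1,…,n} with i ≠ j satisfy ξ̄ⁱ ≤ ξ̄ʲ componentwise, then zᵢ ≤ zⱼ. -/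
/-- (Validity of the strengthened dominance inequalities.) If `ξ⁰` is a valid lower bound
for `v` on the MILP feasible set and `ξ̄ⁱₖ = max{ξⁱₖ, ξ⁰ₖ}`, then for every
`(x,v,z) ∈ F_MINLP` and `i ≠ j` with `ξ̄ⁱ ≤ ξ̄ʲ` componentwise one has `zᵢ ≤ zⱼ`. -/
theorem stmt10 (n m d : ℕ) (hn : 0 < n) (hm : 0 < m) (hd : 0 < d)
    (ξ : Fin n → Fin m → ℝ) (hξ : ∀ i k, 0 ≤ ξ i k)
    (p : Fin n → ℝ) (hp : ∀ i, 0 ≤ p i) (hps : ∑ i, p i = 1)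
    (ε : ℝ) (hε0 : 0 < ε) (hε1 : ε < 1)
    (X : Set (Fin d → ℝ)) (T : Matrix (Fin m) (Fin d) ℝ)
    (ξ0 : Fin m → ℝ)
    (hlb : ∀ q ∈ milpSet n m d ξ p ε X T, ∀ k, ξ0 k ≤ q.2.1 k)
    (x : Fin d → ℝ) (v : Fin m → ℝ) (z : Fin n → ℝ)
    (hmem : (x, v, z) ∈ minlpSet n m d ξ p ε X T)
    (i j : Fin n) (hij : i ≠ j)
    (hdom : ∀ k, max (ξ i k) (ξ0 k) ≤ max (ξ j k) (ξ0 k)) :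
    z i ≤ z j := by
  obtain ⟨hq, hcut⟩ := hmem
  have h0 := hlb _ hq
  obtain ⟨-, -, -, hz, hv, -⟩ := hq
  dsimp only at h0 hz hv hcut
  rcases hz i with hi | hi <;> rcases hz j with hj | hj
  · rw [hi, hj]
  · rw [hi, hj]; exact zero_le_one
  · -- `z j = 0` forces `v ≥ ξ j`, so `v ≥ max (ξ j) ξ0 ≥ ξ i`, which `z i = 1` forbids.
    exfalso
    obtain ⟨k, hk⟩ := hcut i hi
    have hvj : ξ j k ≤ v k := by simpa [hj] using hv j k
    exact absurd ((le_max_left _ _).trans ((hdom k).trans (max_le hvj (h0 k)))) (not_le.mpr hk)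
  · rw [hi, hj]
end

section
/- (Theorem 4.1: nonemptiness characterization of the node set.) Let N₀, N₁ ⊆ {1,…,n} be disjoint. For j ∈ N₁ let M_j = {k ∈ {1,…,m} : ξʲₖ > ξ^{N₀}ₖ}; let L be the set of functions ℓ : N₁ → {1,…,m} with ℓ(j) ∈ M_j for all j ∈ N₁; for ℓ ∈ L and v ∈ ℝ^m say that d_ℓ(v) holds if v_{ℓ(j)} < ξʲ_{ℓ(j)} for every j ∈ N₁; and let N_ℓ = {i ∈ N_f : d_ℓ(ξⁱ) does not hold}. Then C(N₀,N₁) ≠ ∅ if and only if there exists ℓ ∈ L such that ∑_{i ∈ N_ℓ ∪ N₁} pᵢ ≤ ε. -/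
/-! A point `(v, z)` of the node set yields `ℓ` by choosing, for each `j ∈ N₁`, a coordinate
`ℓ j` that witnesses `v ≱ ξʲ`. Every scenario `i` with `z i = 0` satisfies `ξⁱ ≤ v`, so `ξⁱ` lies
strictly below `ξʲ` at `ℓ j`; hence `N_ℓ ∪ N₁ ⊆ {i | z i = 1}` and the knapsack constraint bounds
the sum over `N_ℓ ∪ N₁`.

Conversely, given `ℓ`, let `v` be the componentwise maximum of `0` and the scenarios outside
`N_ℓ ∪ N₁`, and let `z i = 0` exactly when `ξⁱ ≤ v`. All these scenarios are strictly below `ξʲ`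
at `ℓ j`, so `z = 1` on `N₁`, while `{i | z i = 1} ⊆ N_ℓ ∪ N₁` gives the knapsack constraint. -/

/-- The node set `C(N₀, N₁)`: the joint mixing set with knapsack constraint and the
if-then constraints, with variables in `N₀` fixed to `0` and variables in `N₁` fixed
to `1`. -/
def nodeC (n m : ℕ) (ξ : Fin n → Fin m → ℝ) (p : Fin n → ℝ) (ε : ℝ)
    (N₀ N₁ : Finset (Fin n)) : Set ((Fin m → ℝ) × (Fin n → ℝ)) :=
  {q | (∀ k, 0 ≤ q.1 k) ∧ (∀ i, q.2 i = 0 ∨ q.2 i = 1) ∧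
      (∀ i k, (1 - q.2 i) * ξ i k ≤ q.1 k) ∧
      (∑ i, p i * q.2 i ≤ ε) ∧
      (∀ i, q.2 i = 1 → ∃ k, q.1 k < ξ i k) ∧
      (∀ i ∈ N₀, q.2 i = 0) ∧ (∀ i ∈ N₁, q.2 i = 1)}

/-- `ξ^{N₀}ₖ = max_{i ∈ N₀} ξⁱₖ`, with `ξ^{N₀} = 0` if `N₀ = ∅` (for nonnegative `ξ`,
inserting `0` realizes exactly this convention). -/
noncomputable def xiMax (n m : ℕ) (ξ : Fin n → Fin m → ℝ) (N₀ : Finset (Fin n)) : Fin m → ℝ :=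
  fun k => (insert (0 : ℝ) (N₀.image fun i => ξ i k)).max' (Finset.insert_nonempty _ _)

/-- Positivity of `a` appears because `0` is among the values in the maximum. -/
theorem xiMax_lt_iff {n m : ℕ} {ξ : Fin n → Fin m → ℝ} {S : Finset (Fin n)} {k : Fin m} {a : ℝ} :
    xiMax n m ξ S k < a ↔ 0 < a ∧ ∀ i ∈ S, ξ i k < a := by
  simp [xiMax, Finset.max'_lt_iff]

theorem xiMax_nonneg {n m : ℕ} (ξ : Fin n → Fin m → ℝ) (S : Finset (Fin n)) (k : Fin m) :
    0 ≤ xiMax n m ξ S k :=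
  Finset.le_max' _ _ (Finset.mem_insert_self _ _)

theorem le_xiMax {n m : ℕ} (ξ : Fin n → Fin m → ℝ) {S : Finset (Fin n)} {i : Fin n} (hi : i ∈ S)
    (k : Fin m) : ξ i k ≤ xiMax n m ξ S k :=
  Finset.le_max' _ _ (Finset.mem_insert_of_mem (Finset.mem_image_of_mem (fun i => ξ i k) hi))

/-- (Theorem 4.1: nonemptiness characterization of the node set.) `C(N₀,N₁) ≠ ∅` iff
there is a choice function `ℓ` with `ℓ(j) ∈ M_j = {k : ξʲₖ > ξ^{N₀}ₖ}` for all `j ∈ N₁`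
such that `∑_{i ∈ N_ℓ ∪ N₁} pᵢ ≤ ε`, where
`N_ℓ = {i ∈ N_f : ¬(∀ j ∈ N₁, ξⁱ_{ℓ(j)} < ξʲ_{ℓ(j)})}`. -/
theorem stmt11 (n m : ℕ) (hn : 0 < n) (hm : 0 < m)
    (ξ : Fin n → Fin m → ℝ) (hξ : ∀ i k, 0 ≤ ξ i k)
    (p : Fin n → ℝ) (hp : ∀ i, 0 ≤ p i) (hps : ∑ i, p i = 1)
    (ε : ℝ) (hε0 : 0 < ε) (hε1 : ε < 1)
    (N₀ N₁ : Finset (Fin n)) (hdisj : Disjoint N₀ N₁) :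
    (nodeC n m ξ p ε N₀ N₁).Nonempty ↔
      ∃ ℓ : Fin n → Fin m,
        (∀ j ∈ N₁, xiMax n m ξ N₀ (ℓ j) < ξ j (ℓ j)) ∧
        ∑ i ∈ ((Finset.univ \ (N₀ ∪ N₁)).filter
              (fun i => ¬ ∀ j ∈ N₁, ξ i (ℓ j) < ξ j (ℓ j))) ∪ N₁, p i ≤ ε := by
  classical
  constructor
  · rintro ⟨⟨v, z⟩, hv, hz, hvz, hk, hw, h0, h1⟩
    dsimp only at hv hz hvz hk hw h0 h1
    have hle : ∀ i, z i = 0 → ∀ k, ξ i k ≤ v k := fun i hi k => by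
      simpa [hi] using hvz i k
    -- Outside `N₁` the value of `ℓ` is irrelevant; `0 < m` provides one.
    have hex : ∀ j, ∃ k, j ∈ N₁ → v k < ξ j k := fun j => by
      by_cases hj : j ∈ N₁
      · obtain ⟨k, hk⟩ := hw j (h1 j hj)
        exact ⟨k, fun _ => hk⟩
      · exact ⟨⟨0, hm⟩, fun h => absurd h hj⟩
    choose ℓ hℓ using hex
    refine ⟨ℓ, fun j hj => xiMax_lt_iff.2 ⟨(hv _).trans_lt (hℓ j hj), fun i hi =>
      (hle i (h0 i hi) _).trans_lt (hℓ j hj)⟩, ?_⟩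
    set T := ((Finset.univ \ (N₀ ∪ N₁)).filter
      (fun i => ¬ ∀ j ∈ N₁, ξ i (ℓ j) < ξ j (ℓ j))) ∪ N₁ with hT
    have hT1 : ∀ i ∈ T, z i = 1 := fun i hi => by
      rcases Finset.mem_union.1 hi with hi | hi
      · exact (hz i).resolve_left fun h => (Finset.mem_filter.1 hi).2 fun j hj =>
          (hle i h _).trans_lt (hℓ j hj)
      · exact h1 i hi
    calc ∑ i ∈ T, p i = ∑ i ∈ T, p i * z i :=
          Finset.sum_congr rfl fun i hi => by rw [hT1 i hi, mul_one]
      _ ≤ ∑ i, p i * z i :=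
          Finset.sum_le_sum_of_subset_of_nonneg (Finset.subset_univ _) fun i _ _ =>
            mul_nonneg (hp i) (by rcases hz i with h | h <;> simp [h])
      _ ≤ ε := hk
  · rintro ⟨ℓ, hℓ, hsum⟩
    set T := ((Finset.univ \ (N₀ ∪ N₁)).filter
      (fun i => ¬ ∀ j ∈ N₁, ξ i (ℓ j) < ξ j (ℓ j))) ∪ N₁ with hT
    set v := xiMax n m ξ Tᶜ with hv
    have hlt : ∀ j ∈ N₁, v (ℓ j) < ξ j (ℓ j) := fun j hj => by
      obtain ⟨hpos, hN₀⟩ := xiMax_lt_iff.1 (hℓ j hj)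
      refine xiMax_lt_iff.2 ⟨hpos, fun i hi => ?_⟩
      by_cases hi0 : i ∈ N₀
      · exact hN₀ i hi0
      · by_contra hcon
        refine Finset.mem_compl.1 hi ?_
        by_cases hi1 : i ∈ N₁
        · exact Finset.mem_union_right _ hi1
        · exact Finset.mem_union_left _ (Finset.mem_filter.2
            ⟨by simp [hi0, hi1], fun h => hcon (h j hj)⟩)
    have hN₀T : ∀ i ∈ N₀, i ∈ Tᶜ := fun i hi => by
      have := Finset.disjoint_left.1 hdisj hi
      simp [hT, hi, this]
    refine ⟨(v, fun i => if ∀ k, ξ i k ≤ v k then 0 else 1), xiMax_nonneg _ _, fun i => ?_,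
      fun i k => ?_, ?_, fun i hi => ?_, fun i hi => if_pos fun k => le_xiMax ξ (hN₀T i hi) k,
      fun j hj => if_neg fun h => (h (ℓ j)).not_gt (hlt j hj)⟩
    · dsimp only
      split_ifs <;> simp
    · dsimp only
      split_ifs with h
      · simpa using h k
      · simpa using xiMax_nonneg ξ Tᶜ k
    · refine le_trans ?_ hsum
      rw [← Finset.sum_subset (Finset.subset_univ T) fun i _ hi => ?_]
      · refine Finset.sum_le_sum fun i _ => mul_le_of_le_one_right (hp i) ?_
        dsimp only
        split_ifs <;> norm_num
      · have : ∀ k, ξ i k ≤ v k := le_xiMax ξ (Finset.mem_compl.2 hi)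
        simp [this]
    · by_contra! hcon
      simp [hcon] at hi
end

section
/- (Correctness of the set-covering reduction in Theorem 4.3.) Let t, r ≥ 1, let 𝒥 = {t+1,…,t+r}, let 𝒥₁,…,𝒥ₜ ⊆ 𝒥, let B ∈ ℕ, and for j ∈ 𝒥 let I_j = {i ∈ {1,…,t} : j ∈ 𝒥ᵢ}. Construct an instance with n = t + r, m = t, pᵢ = 1/(t+r) for all i, ε = (B+r)/(t+r), N₀ = ∅, N₁ = 𝒥 (so N_f = {1,…,t}); ξⁱ = eᵢ (the i-th standard unit vector of ℝᵗ) for i ∈ {1,…,t}; and for j ∈ 𝒥, ξʲₖ = 1 if k ∈ I_j and ξʲₖ = 0 otherwise. With M_j = {k ∈ {1,…,m} : ξʲₖ > 0} and M_{ji} = {k ∈ M_j : ξʲₖ ≤ ξⁱₖ}, the system — ∃ w_{jk} ∈ {0,1} (j ∈ N₁, k ∈ M_j) and zᵢ ∈ {0,1} (i ∈ N_f) with ∑_{k∈M_j} w_{jk} = 1 for all j ∈ N₁, ∑_{k∈M_{ji}} w_{jk} ≤ zᵢ for all j ∈ N₁ and i ∈ N_f, and ∑_{i∈N_f} pᵢ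 zᵢ ≤ ε − ∑_{j∈N₁} p_j — has a feasible solution if and only if there exists S ⊆ {1,…,t} with |S| ≤ B and ⋃_{i∈S} 𝒥ᵢ = 𝒥. -/
/-!
A scenario `j ∈ 𝒥` is dominated at coordinate `k ∈ M_j` by the unit vector `eᵢ` only when `k = i`,
so `M_{ji}` is `{i}` if `j ∈ 𝒥ᵢ` and empty otherwise (`filter_dominated`). The linking constraints
therefore say `w_{ji} ≤ zᵢ` whenever `j ∈ 𝒥ᵢ`, and the probability constraint, cleared of the
factor `1/(t+r)`, says `∑ zᵢ ≤ B` (`budget_iff`). A feasible `z` is thus the indicator of a set of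
at most `B` indices, and the assignment constraint for `j` picks an `i` in this set with
`j ∈ 𝒥ᵢ`; conversely a cover yields `z` as its indicator and `w` from a choice of a covering index
for every `j`.
-/

theorem filter_pos {t r : ℕ} {J : Fin t → Finset (Fin r)} {ξe : Fin r → Fin t → ℝ}
    (hξe : ∀ j k, ξe j k = if j ∈ J k then 1 else 0) (j : Fin r) :
    Finset.univ.filter (fun k => 0 < ξe j k) = Finset.univ.filter (fun k => j ∈ J k) := by
  ext k
  by_cases h : j ∈ J k <;> simp [hξe, h]

theorem filter_dominated {t r : ℕ} {J : Fin t → Finset (Fin r)}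
    {ξu : Fin t → Fin t → ℝ} {ξe : Fin r → Fin t → ℝ}
    (hξu : ∀ i k, ξu i k = if k = i then 1 else 0)
    (hξe : ∀ j k, ξe j k = if j ∈ J k then 1 else 0) (j : Fin r) (i : Fin t) :
    Finset.univ.filter (fun k => 0 < ξe j k ∧ ξe j k ≤ ξu i k) =
      if j ∈ J i then {i} else ∅ := by
  ext k
  by_cases hki : k = i
  · subst hki
    by_cases h : j ∈ J k <;> simp [hξu, hξe, h]
  · by_cases h : j ∈ J k <;> by_cases h' : j ∈ J i <;>
      simp [hξu, hξe, h, h', hki, not_le.mpr (zero_lt_one' ℝ)]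

theorem budget_iff {t r : ℕ} (ht : 0 < t) (B : ℕ) (z : Fin t → ℝ) :
    ∑ i : Fin t, (1 / (t + r : ℝ)) * z i ≤
        (B + r : ℝ) / (t + r) - ∑ _j : Fin r, (1 / (t + r : ℝ)) ↔
      ∑ i, z i ≤ B := by
  have hpos : (0 : ℝ) < t + r := by positivity
  have hrhs : (B + r : ℝ) / (t + r) - ∑ _j : Fin r, (1 / (t + r : ℝ)) =
      (1 / (t + r : ℝ)) * B := by
    rw [Finset.sum_const, Finset.card_univ, Fintype.card_fin, nsmul_eq_mul]
    ring
  rw [hrhs, ← Finset.mul_sum]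
  exact mul_le_mul_iff_right₀ (by positivity)


/-- (Correctness of the set-covering reduction in Theorem 4.3.) For the constructed
instance — `n = t + r`, `m = t`, `pᵢ = 1/(t+r)`, `ε = (B+r)/(t+r)`, `N₀ = ∅`,
`N₁ = 𝒥` (so `N_f = {1,…,t}`), `ξⁱ = eᵢ` for the scenarios indexed by `i ∈ {1,…,t}`
and `ξʲₖ = 1` iff `k ∈ I_j = {i : j ∈ 𝒥ᵢ}` for the scenarios indexed by the elements
`j ∈ 𝒥` — the feasibility system of Corollary 4.2 (with `M_j = {k : ξʲₖ > 0}` and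
`M_{ji} = {k ∈ M_j : ξʲₖ ≤ ξⁱₖ}`) has a feasible solution iff the set covering
instance has a cover `S ⊆ {1,…,t}` with `|S| ≤ B` and `⋃_{i ∈ S} 𝒥ᵢ = 𝒥`. -/
theorem stmt13 (t r : ℕ) (ht : 0 < t) (hr : 0 < r) (B : ℕ)
    (J : Fin t → Finset (Fin r))
    (ξu : Fin t → Fin t → ℝ) (ξe : Fin r → Fin t → ℝ)
    (hξu : ∀ i k, ξu i k = if k = i then 1 else 0)
    (hξe : ∀ j k, ξe j k = if j ∈ J k then 1 else 0) :
    (∃ (w : Fin r → Fin t → ℝ) (z : Fin t → ℝ),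
        (∀ (j : Fin r), ∀ k ∈ Finset.univ.filter (fun k => 0 < ξe j k),
            w j k = 0 ∨ w j k = 1) ∧
        (∀ i : Fin t, z i = 0 ∨ z i = 1) ∧
        (∀ j : Fin r, ∑ k ∈ Finset.univ.filter (fun k => 0 < ξe j k), w j k = 1) ∧
        (∀ (j : Fin r) (i : Fin t),
          ∑ k ∈ Finset.univ.filter (fun k => 0 < ξe j k ∧ ξe j k ≤ ξu i k), w j k ≤ z i) ∧
        ∑ i : Fin t, (1 / (t + r : ℝ)) * z i ≤
          (B + r : ℝ) / (t + r) - ∑ _j : Fin r, (1 / (t + r : ℝ)))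
      ↔ ∃ S : Finset (Fin t), S.card ≤ B ∧ S.biUnion J = Finset.univ := by
  simp only [budget_iff ht, filter_pos hξe, filter_dominated hξu hξe]
  constructor
  · rintro ⟨w, z, hw, hz, hsum, hlink, hB⟩
    refine ⟨Finset.univ.filter (fun i => z i = 1), ?_, ?_⟩
    · have hcard : ((Finset.univ.filter (fun i => z i = 1)).card : ℝ) = ∑ i, z i := by
        rw [Finset.card_filter, Nat.cast_sum]
        refine Finset.sum_congr rfl fun i _ => ?_
        rcases hz i with h | h <;> simp [h]
      exact_mod_cast hcard.trans_le hB
    · refine Finset.eq_univ_of_forall fun j => ?_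
      obtain ⟨k, hk, hne⟩ := Finset.exists_ne_zero_of_sum_ne_zero
        (by rw [hsum j]; exact one_ne_zero)
      have hwk := (hw j k hk).resolve_left hne
      have hjk : j ∈ J k := by simpa using hk
      have hle := hlink j k
      rw [if_pos hjk, Finset.sum_singleton, hwk] at hle
      have hzk : z k = 1 := (hz k).resolve_left fun h => by linarith
      exact Finset.mem_biUnion.mpr ⟨k, by simpa using hzk, hjk⟩
  · rintro ⟨S, hS, hcov⟩
    have hex : ∀ j : Fin r, ∃ i ∈ S, j ∈ J i := fun j =>
      Finset.mem_biUnion.mp (hcov ▸ Finset.mem_univ j)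
    choose f hfS hfJ using hex
    refine ⟨fun j k => if k = f j then 1 else 0, fun i => if i ∈ S then 1 else 0,
      fun j k _ => (ite_eq_or_eq _ _ _).symm, fun i => (ite_eq_or_eq _ _ _).symm, ?_, ?_, ?_⟩
    · intro j
      simp [hfJ j]
    · intro j i
      by_cases hj : j ∈ J i
      · rw [if_pos hj, Finset.sum_singleton]
        by_cases hi : i = f j
        · simp [hi, hfS j]
        · simp only [if_neg hi]
          split_ifs <;> norm_num
      · simp only [if_neg hj, Finset.sum_empty]
        split_ifs <;> norm_num
    · simpa using hS
end

section
/- (Validity of lower bounds at a node.) Let N₀, N₁ ⊆ {1,…,n} be disjoint and let (v,z) ∈ C(N₀,N₁). Then (a) v ≥ ξ^{N₀}; and (b) for every S ⊆ N_f with ∑_{i∈S} pᵢ > ε − ∑_{i∈N₁} pᵢ there exists i ∈ S with zᵢ = 0, and consequently vₖ ≥ min_{i∈S} ξⁱₖ for every k ∈ {1,…,m}. -/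
/-- (Validity of lower bounds at a node.) For `(v,z) ∈ C(N₀,N₁)`:
(a) `v ≥ ξ^{N₀}`; and (b) for every `S ⊆ N_f` with
`∑_{i ∈ S} pᵢ > ε − ∑_{i ∈ N₁} pᵢ` there is `i ∈ S` with `zᵢ = 0`, and consequently
`vₖ ≥ min_{i ∈ S} ξⁱₖ` for every `k`. -/
theorem stmt14 (n m : ℕ) (hn : 0 < n) (hm : 0 < m)
    (ξ : Fin n → Fin m → ℝ) (hξ : ∀ i k, 0 ≤ ξ i k)
    (p : Fin n → ℝ) (hp : ∀ i, 0 ≤ p i) (hps : ∑ i, p i = 1)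
    (ε : ℝ) (hε0 : 0 < ε) (hε1 : ε < 1)
    (N₀ N₁ : Finset (Fin n)) (hdisj : Disjoint N₀ N₁)
    (v : Fin m → ℝ) (z : Fin n → ℝ) (hmem : (v, z) ∈ nodeC n m ξ p ε N₀ N₁) :
    (∀ k, xiMax n m ξ N₀ k ≤ v k) ∧
    ∀ S ⊆ Finset.univ \ (N₀ ∪ N₁), ε - ∑ i ∈ N₁, p i < ∑ i ∈ S, p i →
      (∃ i ∈ S, z i = 0) ∧
      ∀ (hSne : S.Nonempty) (k : Fin m), S.inf' hSne (fun i => ξ i k) ≤ v k := by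
  obtain ⟨hv0, hz01, hcov, hknap, -, hN₀, hN₁⟩ := hmem
  dsimp only at hv0 hz01 hcov hknap hN₀ hN₁
  have hbound : ∀ i, z i = 0 → ∀ k, ξ i k ≤ v k := fun i hi k => by
    simpa [hi] using hcov i k
  refine ⟨fun k => ?_, fun S hS hSε => ?_⟩
  · refine Finset.max'_le _ _ _ fun y hy => ?_
    rcases Finset.mem_insert.1 hy with rfl | hy
    · exact hv0 k
    · obtain ⟨i, hi, rfl⟩ := Finset.mem_image.1 hy
      exact hbound i (hN₀ i hi) k
  · have hex : ∃ i ∈ S, z i = 0 := by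
      by_contra! hne
      have hone : ∀ i ∈ N₁ ∪ S, z i = 1 := fun i hi => by
        rcases Finset.mem_union.1 hi with hi | hi
        · exact hN₁ i hi
        · exact (hz01 i).resolve_left (hne i hi)
      have hd : Disjoint N₁ S := Finset.disjoint_left.2 fun i hi hiS =>
        (Finset.mem_sdiff.1 (hS hiS)).2 (Finset.mem_union_right _ hi)
      have hsum : ∑ i ∈ N₁ ∪ S, p i ≤ ∑ i, p i * z i :=
        calc ∑ i ∈ N₁ ∪ S, p i = ∑ i ∈ N₁ ∪ S, p i * z i :=
              Finset.sum_congr rfl fun i hi => by rw [hone i hi, mul_one]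
          _ ≤ ∑ i, p i * z i :=
              Finset.sum_le_sum_of_subset_of_nonneg (Finset.subset_univ _) fun i _ _ =>
                mul_nonneg (hp i) (by rcases hz01 i with h | h <;> simp [h])
      rw [Finset.sum_union hd] at hsum
      linarith
    refine ⟨hex, fun hSne k => ?_⟩
    obtain ⟨i, hi, hi0⟩ := hex
    exact (Finset.inf'_le _ hi).trans (hbound i hi0 k)
end
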